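/- arXiv:1403.1218 — 2 statements merged into one kernel-verified Lean document; each statement's English description precedes it below -/
import Mathlib

section
/- Let U be an F_q-subspace of F_{q^n} with 1 ∈ U, and let F_{q^r} be the best friend of U. Then |orb(U)| = (q^n − 1)/(q^r − 1) and |Stab(U)| = q^r − 1. -/
/-! The group `Kˣ` acts on the subspaces of `K` by multiplication; the orbit code is an orbit of
this action and `Stab(U)` is a stabilizer, so `|orb(U)| * |Stab(U)| = |K| - 1`. It remains to
compute the stabilizer. The elements `c` with `cU ⊆ U` form an intermediate field (`multField`),
which is a friend of `U` containing every other friend, hence is the best friend `E`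
(`multField_eq`). Since `K` is finite, `cU ⊆ U` forces `cU = U` for `c ≠ 0`, so `Stab(U)` is
`E` without `0` (`stab_eq`). -/


/-- The subspace `Uγ = {uγ : u ∈ U}` of the `F`-vector space `K`. -/
def mulMap (F K : Type) [Field F] [Field K] [Algebra F K] (γ : K) (U : Submodule F K) :
    Submodule F K :=
  U.map (LinearMap.mulRight F γ)

/-- The stabilizer `Stab(U) = {γ ∈ K^* : Uγ = U}`. -/
def stab (F K : Type) [Field F] [Field K] [Algebra F K] (U : Submodule F K) : Set K :=
  {γ : K | γ ≠ 0 ∧ mulMap F K γ U = U}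

/-- The cyclic orbit code `orb(U) = {Uγ : γ ∈ K^*}`. -/
def orb (F K : Type) [Field F] [Field K] [Algebra F K] (U : Submodule F K) :
    Set (Submodule F K) :=
  {V : Submodule F K | ∃ γ : K, γ ≠ 0 ∧ V = mulMap F K γ U}

/-- A subfield `E` of `K` (containing `F`) is a friend of `U` if `U` is a vector space
over `E`, i.e. `c * u ∈ U` for all `c ∈ E`, `u ∈ U`. -/
def IsFriend (F K : Type) [Field F] [Field K] [Algebra F K] (E : IntermediateField F K)
    (U : Submodule F K) : Prop :=
  ∀ c ∈ E, ∀ u ∈ U, c * u ∈ U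

/-- The multiplier ring `{c : K | cU ⊆ U}` of `U`, as an intermediate field: it is a subalgebra
of an algebraic extension, hence closed under inverses. -/
def multField (F K : Type) [Field F] [Field K] [Finite K] [Algebra F K] (U : Submodule F K) :
    IntermediateField F K :=
  Subalgebra.toIntermediateField
    { carrier := {c : K | ∀ u ∈ U, c * u ∈ U}
      mul_mem' := fun {a b} ha hb u hu => by
        rw [mul_assoc]
        exact ha _ (hb _ hu)
      add_mem' := fun {a b} ha hb u hu => by
        rw [add_mul]
        exact U.add_mem (ha _ hu) (hb _ hu)
      algebraMap_mem' := fun a u hu => by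
        rw [← Algebra.smul_def]
        exact U.smul_mem a hu }
    (fun x hx => Subalgebra.inv_mem_of_algebraic (A := _) (x := ⟨x, hx⟩)
      (Algebra.IsAlgebraic.isAlgebraic (R := F) x))

lemma mem_multField {F K : Type} [Field F] [Field K] [Finite K] [Algebra F K]
    {U : Submodule F K} {c : K} : c ∈ multField F K U ↔ ∀ u ∈ U, c * u ∈ U := Iff.rfl

/-- The multiplier field is the largest friend, so it coincides with the best friend. -/
lemma multField_eq {F K : Type} [Field F] [Field K] [Finite K] [Algebra F K]
    {U : Submodule F K} {E : IntermediateField F K} (hfriend : IsFriend F K E U)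
    (hbest : ∀ E' : IntermediateField F K, IsFriend F K E' U → Nat.card E' ≤ Nat.card E) :
    E = multField F K U :=
  SetLike.coe_injective <| Set.eq_of_subset_of_ncard_le (fun c hc => hfriend c hc)
    (hbest (multField F K U) fun _ hc => hc) (Set.toFinite _)

open scoped Pointwise in
lemma mulMap_units {F K : Type} [Field F] [Field K] [Algebra F K] (g : Kˣ) (U : Submodule F K) :
    mulMap F K g U = g • U := by
  ext x
  simp [mulMap, Submodule.mem_smul_pointwise_iff_exists, Units.smul_def, mul_comm]

/-- An inclusion `Uγ ⊆ U` with `γ ≠ 0` is an equality, since multiplication by `γ` is injective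
and `U` is finite. -/
lemma stab_eq {F K : Type} [Field F] [Field K] [Finite K] [Algebra F K] (U : Submodule F K) :
    stab F K U = (multField F K U : Set K) \ {0} := by
  ext c
  simp only [stab, Set.mem_ofPred_eq, Set.mem_sdiff, SetLike.mem_coe, Set.mem_singleton_iff,
    mem_multField]
  constructor
  · rintro ⟨h0, h⟩
    refine ⟨fun u hu => ?_, h0⟩
    rw [← h]
    exact ⟨u, hu, mul_comm _ _⟩
  · rintro ⟨h, h0⟩
    refine ⟨h0, SetLike.coe_injective (Set.eq_of_subset_of_ncard_le ?_ ?_ (Set.toFinite _))⟩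
    · rintro _ ⟨u, hu, rfl⟩
      simpa [mul_comm] using h u hu
    · have := Set.ncard_image_of_injective (U : Set K) (mul_left_injective₀ h0)
      exact this.ge

open scoped Pointwise in
lemma orb_eq {F K : Type} [Field F] [Field K] [Algebra F K] (U : Submodule F K) :
    orb F K U = MulAction.orbit Kˣ U := by
  ext V
  constructor
  · rintro ⟨c, h0, rfl⟩
    exact ⟨Units.mk0 c h0, (mulMap_units (Units.mk0 c h0) U).symm⟩
  · rintro ⟨g, rfl⟩
    exact ⟨g, g.ne_zero, (mulMap_units g U).symm⟩

open scoped Pointwise in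
lemma stab_eq_image {F K : Type} [Field F] [Field K] [Algebra F K] (U : Submodule F K) :
    stab F K U = Set.image Units.val (MulAction.stabilizer Kˣ U : Set Kˣ) := by
  ext c
  constructor
  · rintro ⟨h0, h⟩
    exact ⟨Units.mk0 c h0, (mulMap_units (Units.mk0 c h0) U).symm.trans h, rfl⟩
  · rintro ⟨g, hg, rfl⟩
    exact ⟨g.ne_zero, (mulMap_units g U).trans hg⟩

open scoped Pointwise in
/-- The orbit–stabilizer formula for `Kˣ` acting on the subspaces of `K`. -/
lemma orb_mul_stab {F K : Type} [Field F] [Field K] [Finite K] [Algebra F K]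
    (U : Submodule F K) :
    (orb F K U).ncard * (stab F K U).ncard = Nat.card K - 1 := by
  rw [orb_eq, stab_eq_image, Set.ncard_image_of_injective _ Units.val_injective, ← Nat.card_units]
  rw [← MulAction.index_stabilizer, mul_comm]
  exact Subgroup.card_mul_index _

/-- Let `U` be an `F_q`-subspace of `F_{q^n}` with `1 ∈ U`, and let
`F_{q^r}` be the best friend of `U` (a friend of largest cardinality).  Then
`|orb(U)| = (q^n − 1)/(q^r − 1)` and `|Stab(U)| = q^r − 1`. -/
theorem stmt7 (q n r : ℕ) (F K : Type) [Field F] [Field K] [Finite F] [Finite K] [Algebra F K]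
    (hq : Nat.card F = q) (hn : Module.finrank F K = n)
    (U : Submodule F K) (hU : (1 : K) ∈ U)
    (E : IntermediateField F K) (hEr : Nat.card ↥E = q ^ r)
    (hfriend : IsFriend F K E U)
    (hbest : ∀ E' : IntermediateField F K, IsFriend F K E' U →
      Nat.card ↥E' ≤ Nat.card ↥E) :
    Set.ncard (orb F K U) = (q ^ n - 1) / (q ^ r - 1) ∧
    Set.ncard (stab F K U) = q ^ r - 1 := by
  have hS : (stab F K U).ncard = q ^ r - 1 := by
    rw [stab_eq, ← multField_eq hfriend hbest,
      Set.ncard_sdiff_singleton_of_mem (zero_mem E), ← hEr]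
    rfl
  refine ⟨?_, hS⟩
  have hmul := orb_mul_stab U
  rw [hS, Module.natCard_eq_pow_finrank (K := F), hq, hn] at hmul
  -- `q ^ r = |E| > 1`, so the division is by a positive number.
  have hpos : 0 < q ^ r - 1 := by
    rw [← hEr]
    exact Nat.sub_pos_of_lt Finite.one_lt_card
  exact (Nat.div_eq_of_eq_mul_left hpos hmul.symm).symm
end

section
/- Let U be a k-dimensional F_q-subspace of F_{q^n} with 1 ∈ U and U ≠ F_{q^n}, and let F_{q^r} be the best friend of U. Then the following are equivalent: (i) d_S(orb(U)) = 2k; (ii) r = k; (iii) U = F_{q^k}. Moreover, if these hold then orb(U) is a spread of F_{q^n}: any two distinct members of orb(U) intersect in {0}, and the union of all members of orb(U) is F_{q^n}. -/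
/-- The subspace distance `d_S(V,W) = dim V + dim W − 2 dim (V ∩ W)`. -/
noncomputable def sdist (F : Type) [Field F] {M : Type} [AddCommGroup M] [Module F M]
    (V W : Submodule F M) : ℕ :=
  Module.finrank F ↥V + Module.finrank F ↥W - 2 * Module.finrank F ↥(V ⊓ W)

/-- The subspace distance of a code: `d_S(C) = min {d_S(V,W) : V,W ∈ C, V ≠ W}`. -/
noncomputable def cdist (F : Type) [Field F] {M : Type} [AddCommGroup M] [Module F M]
    (C : Set (Submodule F M)) : ℕ :=
  sInf {d : ℕ | ∃ V ∈ C, ∃ W ∈ C, V ≠ W ∧ d = sdist F V W}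

theorem mem_mulMap_iff {F K : Type} [Field F] [Field K] [Algebra F K] {γ x : K}
    {U : Submodule F K} : x ∈ mulMap F K γ U ↔ ∃ u ∈ U, u * γ = x := by
  simp [mulMap, Submodule.mem_map]

theorem mulMap_one {F K : Type} [Field F] [Field K] [Algebra F K] (U : Submodule F K) :
    mulMap F K 1 U = U := by
  ext x
  simp [mem_mulMap_iff]

theorem finrank_mulMap {F K : Type} [Field F] [Field K] [Algebra F K] {γ : K} (hγ : γ ≠ 0)
    (U : Submodule F K) : Module.finrank F (mulMap F K γ U) = Module.finrank F U :=
  (Submodule.equivMapOfInjective (LinearMap.mulRight F γ)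
    (mul_left_injective₀ hγ) U).finrank_eq.symm

theorem finrank_of_mem_orb {F K : Type} [Field F] [Field K] [Algebra F K] {U V : Submodule F K}
    (hV : V ∈ orb F K U) : Module.finrank F V = Module.finrank F U := by
  obtain ⟨γ, hγ, rfl⟩ := hV
  exact finrank_mulMap hγ U

theorem self_mem_orb {F K : Type} [Field F] [Field K] [Algebra F K] (U : Submodule F K) :
    U ∈ orb F K U :=
  ⟨1, one_ne_zero, (mulMap_one U).symm⟩

theorem mem_mulMap_self {F K : Type} [Field F] [Field K] [Algebra F K] {U : Submodule F K}
    (hU1 : (1 : K) ∈ U) (x : K) : x ∈ mulMap F K x U :=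
  mem_mulMap_iff.2 ⟨1, hU1, one_mul x⟩

/-- If the minimum distance of the orbit is at least `2k`, distinct members meet trivially, because
they all have dimension `k`. -/
theorem inf_eq_bot_of_cdist {F K : Type} [Field F] [Field K] [Finite K] [Algebra F K]
    {U : Submodule F K} (h : 2 * Module.finrank F U ≤ cdist F (orb F K U))
    {V W : Submodule F K} (hV : V ∈ orb F K U) (hW : W ∈ orb F K U) (hVW : V ≠ W) :
    V ⊓ W = ⊥ := by
  have hle : cdist F (orb F K U) ≤ sdist F V W := Nat.sInf_le ⟨V, hV, W, hW, hVW, rfl⟩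
  have hVk := finrank_of_mem_orb hV
  have hWk := finrank_of_mem_orb hW
  have hinf : Module.finrank F ↥(V ⊓ W) ≤ Module.finrank F V :=
    Submodule.finrank_mono inf_le_left
  unfold sdist at hle
  -- the truncated subtraction in `sdist` is harmless because of `hinf`
  exact Submodule.finrank_eq_zero.1 (by omega)

/-- A subspace through `1` whose multiples pairwise coincide or meet trivially is a subfield:
a nonzero `u ∈ U` lies in `U ∩ Uu`, hence `Uu = U`. -/
theorem exists_field_of_trivial_inf {F K : Type} [Field F] [Field K] [Finite K] [Algebra F K]
    {U : Submodule F K} (hU1 : (1 : K) ∈ U)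
    (h : ∀ V ∈ orb F K U, ∀ W ∈ orb F K U, V ≠ W → V ⊓ W = ⊥) :
    ∃ L : IntermediateField F K, ∀ x, x ∈ L ↔ x ∈ U := by
  have hmul : ∀ a ∈ U, ∀ b ∈ U, a * b ∈ U := by
    intro a ha b hb
    by_cases hb0 : b = 0
    · simp [hb0]
    have heq : U = mulMap F K b U := by
      by_contra hne
      have hbot := h U (self_mem_orb U) _ ⟨b, hb0, rfl⟩ hne
      have hmem : b ∈ U ⊓ mulMap F K b U := ⟨hb, mem_mulMap_self hU1 b⟩
      rw [hbot] at hmem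
      exact hb0 ((Submodule.mem_bot F).1 hmem)
    rw [heq]
    exact mem_mulMap_iff.2 ⟨a, ha, rfl⟩
  let S : Subalgebra F K := U.toSubalgebra hU1 (fun a b ha hb => hmul a ha b hb)
  exact ⟨S.toIntermediateField fun x hx => S.inv_mem_of_algebraic (x := ⟨x, hx⟩)
    (Algebra.IsAlgebraic.isAlgebraic x), fun x => Iff.rfl⟩

/-- The multiples of a subfield pairwise coincide or meet trivially: a common nonzero vector
`uγ = wδ` makes `γ / δ` an element of the field. -/
theorem inf_eq_bot_of_field {F K : Type} [Field F] [Field K] [Algebra F K]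
    {U : Submodule F K} {E : IntermediateField F K} (hE : ∀ x, x ∈ E ↔ x ∈ U)
    {V W : Submodule F K} (hV : V ∈ orb F K U) (hW : W ∈ orb F K U) (hVW : V ≠ W) :
    V ⊓ W = ⊥ := by
  obtain ⟨γ, hγ, rfl⟩ := hV
  obtain ⟨δ, hδ, rfl⟩ := hW
  rw [Submodule.eq_bot_iff]
  rintro x ⟨hx, hx'⟩
  by_contra hx0
  obtain ⟨u, hu, rfl⟩ := mem_mulMap_iff.1 hx
  obtain ⟨w, hw, hwu⟩ := mem_mulMap_iff.1 hx'
  have hu0 : u ≠ 0 := left_ne_zero_of_mul hx0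
  have hw0 : w ≠ 0 := by
    rintro rfl
    exact hx0 (by rw [← hwu, zero_mul])
  have hγδ : γ = w / u * δ := by
    field_simp
    linear_combination -hwu
  have hδγ : δ = u / w * γ := by
    field_simp
    linear_combination hwu
  have huE := (hE u).2 hu
  have hwE := (hE w).2 hw
  apply hVW
  ext y
  simp only [mem_mulMap_iff]
  constructor
  · rintro ⟨v, hv, rfl⟩
    refine ⟨v * (w / u), (hE _).1 (E.mul_mem ((hE v).2 hv) (E.div_mem hwE huE)), ?_⟩
    rw [mul_assoc, ← hγδ]
  · rintro ⟨v, hv, rfl⟩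
    refine ⟨v * (u / w), (hE _).1 (E.mul_mem ((hE v).2 hv) (E.div_mem huE hwE)), ?_⟩
    rw [mul_assoc, ← hδγ]

/-- A proper subspace through `1` whose multiples pairwise meet trivially has minimum distance
`2k`; properness provides two distinct members, so the minimum is not over the empty set. -/
theorem cdist_eq_of_trivial_inf {F K : Type} [Field F] [Field K] [Algebra F K]
    {U : Submodule F K} (hU1 : (1 : K) ∈ U) (hUtop : U ≠ ⊤)
    (h : ∀ V ∈ orb F K U, ∀ W ∈ orb F K U, V ≠ W → V ⊓ W = ⊥) :
    cdist F (orb F K U) = 2 * Module.finrank F U := by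
  have hd : ∀ V ∈ orb F K U, ∀ W ∈ orb F K U, V ≠ W →
      sdist F V W = 2 * Module.finrank F U := by
    intro V hV W hW hVW
    rw [sdist, h V hV W hW hVW, finrank_of_mem_orb hV, finrank_of_mem_orb hW, finrank_bot]
    omega
  obtain ⟨x, hx⟩ : ∃ x, x ∉ U := by
    by_contra! hall
    exact hUtop (Submodule.eq_top_iff'.2 hall)
  have hx0 : x ≠ 0 := by
    rintro rfl
    exact hx U.zero_mem
  have hne : U ≠ mulMap F K x U := by
    intro heq
    apply hx
    rw [heq]
    exact mem_mulMap_self hU1 x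
  have hset : {d : ℕ | ∃ V ∈ orb F K U, ∃ W ∈ orb F K U, V ≠ W ∧ d = sdist F V W} =
      {2 * Module.finrank F U} := by
    ext d
    constructor
    · rintro ⟨V, hV, W, hW, hVW, rfl⟩
      exact hd V hV W hW hVW
    · rintro rfl
      have hxo : mulMap F K x U ∈ orb F K U := ⟨x, hx0, rfl⟩
      exact ⟨U, self_mem_orb U, _, hxo, hne, (hd U (self_mem_orb U) _ hxo hne).symm⟩
  rw [cdist, hset, csInf_singleton]

/-- Let `U` be a `k`-dimensional `F_q`-subspace of `F_{q^n}` with `1 ∈ U`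
and `U ≠ F_{q^n}`, and let `F_{q^r}` (realized as the intermediate field `E`) be the best
friend of `U`.  Then `d_S(orb(U)) = 2k ↔ r = k ↔ U = F_{q^k}` (i.e. `U` equals its best
friend `E`, the subfield with `q^k` elements).  Moreover, in that case `orb(U)` is a
spread: distinct members intersect trivially and the members cover `F_{q^n}`. -/
theorem stmt9 (q n k r : ℕ) (F K : Type) [Field F] [Field K] [Finite F] [Finite K] [Algebra F K]
    (hq : Nat.card F = q) (hn : Module.finrank F K = n)
    (U : Submodule F K) (hU1 : (1 : K) ∈ U) (hUk : Module.finrank F ↥U = k) (hUtop : U ≠ ⊤)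
    (E : IntermediateField F K) (hEr : Nat.card ↥E = q ^ r)
    (hfriend : IsFriend F K E U)
    (hbest : ∀ E' : IntermediateField F K, IsFriend F K E' U →
      Nat.card ↥E' ≤ Nat.card ↥E) :
    (cdist F (orb F K U) = 2 * k ↔ r = k) ∧
    (r = k ↔ (E : Set K) = (U : Set K)) ∧
    (cdist F (orb F K U) = 2 * k →
      (∀ V ∈ orb F K U, ∀ W ∈ orb F K U, V ≠ W → V ⊓ W = ⊥) ∧
      (∀ x : K, ∃ V ∈ orb F K U, x ∈ V)) := by
  subst hUk
  have hsub : (E : Set K) ⊆ U := fun c hc => by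
    simpa using hfriend c hc 1 hU1
  have hcardU : Nat.card U = q ^ Module.finrank F U := by
    rw [← hq]
    exact Module.natCard_eq_pow_finrank
  have hq1 : 1 < q := by
    rw [← hq]
    exact Finite.one_lt_card
  have eq_of_card : Nat.card U ≤ Nat.card E → (E : Set K) = U := fun h =>
    Set.eq_of_subset_of_ncard_le hsub h (Set.toFinite _)
  have hrk : r = Module.finrank F U ↔ (E : Set K) = (U : Set K) := by
    constructor
    · rintro rfl
      exact eq_of_card (by rw [hEr, hcardU])
    · intro h
      have hcard : Nat.card E = Nat.card U :=
        Nat.card_congr (Equiv.setCongr h)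
      rw [hEr, hcardU] at hcard
      exact Nat.pow_right_injective hq1 hcard
  have hspread : cdist F (orb F K U) = 2 * Module.finrank F U →
      ∀ V ∈ orb F K U, ∀ W ∈ orb F K U, V ≠ W → V ⊓ W = ⊥ :=
    fun h V hV W hW hVW => inf_eq_bot_of_cdist h.ge hV hW hVW
  refine ⟨?_, hrk, fun h => ⟨hspread h, fun x => ?_⟩⟩
  · rw [hrk]
    constructor
    · intro h
      obtain ⟨L, hL⟩ := exists_field_of_trivial_inf hU1 (hspread h)
      have hLf : IsFriend F K L U := fun c hc u hu =>
        (hL _).1 (L.mul_mem hc ((hL u).2 hu))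
      have hLU : (L : Set K) = U := Set.ext hL
      have hcard : Nat.card L = Nat.card U :=
        Nat.card_congr (Equiv.setCongr hLU)
      exact eq_of_card (hcard ▸ hbest L hLf)
    · intro h
      have hE : ∀ x, x ∈ E ↔ x ∈ U := Set.ext_iff.1 h
      exact cdist_eq_of_trivial_inf hU1 hUtop
        fun V hV W hW hVW => inf_eq_bot_of_field hE hV hW hVW
  · by_cases hx : x = 0
    · exact ⟨U, self_mem_orb U, hx ▸ U.zero_mem⟩
    · exact ⟨_, ⟨x, hx, rfl⟩, mem_mulMap_self hU1 x⟩
end
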